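/- Let k be an algebraically closed field, R an integral domain that is a finitely generated k-algebra with fraction field K, and A a finite flat R-algebra. Let X be the set of closed points of Spec(R) with the subspace topology. Then the map X → ℕ, m ↦ #Bl(A(m)), is lower semicontinuous, and X = ⨿_{n∈ℕ} Bl_n^X(A) with Bl_n^X(A) := {m ∈ X : #Bl(A(m)) = n} is a stratification of X. Moreover max_{m∈X} #Bl(A(m)) = #Bl(A ⊗_K K̄), where K̄ is an algebraic closure of K; and if R is universally catenary, then BlEx^X(A) := {m ∈ X : #Bl(A(m)) < #Bl(A ⊗_K K̄)} is either empty or pure of codimension one in X with finitely many irreducible components. -/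

import Mathlib

open TensorProduct

section BlockDefs
variable {B : Type*} [Ring B]
def IsBlockIdem (e : B) : Prop :=
  IsIdempotentElem e ∧ e ≠ 0 ∧ (∀ x : B, e * x = x * e) ∧
    ∀ f g : B, (∀ x : B, f * x = x * f) → (∀ x : B, g * x = x * g) →
      IsIdempotentElem f → IsIdempotentElem g → f * g = 0 → f + g = e → f = 0 ∨ g = 0
end BlockDefs

noncomputable def numBlocks (B : Type*) [Ring B] : ℕ := Nat.card {e : B // IsBlockIdem e}

noncomputable abbrev resFieldAt (R : Type*) [CommRing R] (p : PrimeSpectrum R) :=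
  IsLocalRing.ResidueField (Localization.AtPrime p.asIdeal)

def IsIrredCompOf {X : Type*} [TopologicalSpace X] (C s : Set X) : Prop :=
  IsIrreducible C ∧ C ⊆ s ∧ ∀ C' : Set X, IsIrreducible C' → C' ⊆ s → C ⊆ C' → C' = C

/-- Pure of codimension one (measured in `Spec R`) with finitely many irreducible components. -/
def IsReducedWeilDivisorIn {R : Type*} [CommRing R] (s : Set (PrimeSpectrum R)) : Prop :=
  {C | IsIrredCompOf C s}.Finite ∧
    ∀ C, IsIrredCompOf C s → ∃ q : PrimeSpectrum R, closure C = closure {q} ∧ Order.height q = 1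

def IsCatenaryRing (R : Type u) [CommRing R] : Prop :=
  ∀ c d : LTSeries (PrimeSpectrum R), c.head = d.head → c.last = d.last →
    (∀ i : Fin c.length, c i.castSucc ⋖ c i.succ) →
    (∀ i : Fin d.length, d i.castSucc ⋖ d i.succ) →
    c.length = d.length

def IsUniversallyCatenary (R : Type u) [CommRing R] : Prop :=
  ∀ n : ℕ, IsCatenaryRing (MvPolynomial (Fin n) R)

section Counting

def CI (B : Type*) [Ring B] : Set B := {e | IsIdempotentElem e ∧ ∀ x, e * x = x * e}

def ciEquiv (B : Type*) [Ring B] : CI B ≃ {e : Subring.center B // IsIdempotentElem e} where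
  toFun e := ⟨⟨e.1, Subring.mem_center_iff.2 fun x => (e.2.2 x).symm⟩, Subtype.ext e.2.1⟩
  invFun e := ⟨e.1.1, congrArg Subtype.val e.2, fun x => (Subring.mem_center_iff.1 e.1.2 x).symm⟩
  left_inv _ := rfl
  right_inv _ := rfl

lemma isAtom_iff_block (B : Type*) [Ring B] (e : {e : Subring.center B // IsIdempotentElem e}) :
    IsAtom e ↔ IsBlockIdem (e.1.1 : B) := by
  have hc : ∀ z : Subring.center B, ∀ x : B, z.1 * x = x * z.1 :=
    fun z x => (Subring.mem_center_iff.1 z.2 x).symm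
  constructor
  · intro h
    refine ⟨congrArg Subtype.val e.2, fun h0 => h.1 (Subtype.ext (Subtype.ext h0)), hc _, ?_⟩
    intro f g hf hg hfi hgi hfg hsum
    let f' : {e : Subring.center B // IsIdempotentElem e} :=
      ⟨⟨f, Subring.mem_center_iff.2 fun x => (hf x).symm⟩, Subtype.ext hfi⟩
    have hle : f' ≤ e := by
      change f'.1 * e.1 = f'.1
      apply Subtype.ext
      change f * e.1.1 = f
      rw [← hsum, mul_add, hfg, add_zero, hfi]
    rcases h.le_iff.1 hle with h1 | h1
    · left
      exact congrArg (fun z => z.1.1) h1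
    · right
      have : f = e.1.1 := congrArg (fun z => z.1.1) h1
      rw [← this] at hsum
      simpa using hsum
  · rintro ⟨h1, h2, h3, h4⟩
    refine ⟨fun h0 => h2 (congrArg (fun z => z.1.1) h0), fun f hf => ?_⟩
    have hle : f.1 * e.1 = f.1 := hf.le
    have hle' : f.1.1 * e.1.1 = f.1.1 := congrArg Subtype.val hle
    have hfi : f.1.1 * f.1.1 = f.1.1 := congrArg Subtype.val f.2
    have hle2 : e.1.1 * f.1.1 = f.1.1 := by rw [h3, hle']
    have hei : e.1.1 * e.1.1 = e.1.1 := h1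
    have := h4 f.1.1 (e.1.1 - f.1.1) (hc _) (fun x => by rw [sub_mul, mul_sub, hc, hc]) hfi
      (by simp only [IsIdempotentElem, mul_sub, sub_mul, hei, hle', hle2, hfi]; simp)
      (by rw [mul_sub, hle', hfi, sub_self]) (by simp)
    rcases this with h | h
    · exact Subtype.ext (Subtype.ext h)
    · exact absurd (Subtype.ext (Subtype.ext (sub_eq_zero.1 h).symm)) hf.ne

def blockEquiv (B : Type*) [Ring B] : {e : {e : Subring.center B // IsIdempotentElem e} // IsAtom e} ≃
    {e : B // IsBlockIdem e} where
  toFun e := ⟨e.1.1.1, (isAtom_iff_block B e.1).1 e.2⟩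
  invFun e := ⟨⟨⟨e.1, Subring.mem_center_iff.2 fun x => (e.2.2.2.1 x).symm⟩, Subtype.ext e.2.1⟩,
    (isAtom_iff_block B _).2 e.2⟩
  left_inv _ := rfl
  right_inv _ := rfl

lemma card_CI (B : Type*) [Ring B] (hfin : (CI B).Finite) :
    (CI B).ncard = 2 ^ numBlocks B := by
  classical
  have : Finite (CI B) := hfin
  have : Finite {e : Subring.center B // IsIdempotentElem e} := Finite.of_equiv _ (ciEquiv B)
  have := Fintype.ofFinite {e : Subring.center B // IsIdempotentElem e}
  let _ := Fintype.toCompleteAtomicBooleanAlgebra {e : Subring.center B // IsIdempotentElem e}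
  have e1 := (CompleteAtomicBooleanAlgebra.toSetOfIsAtom
    (α := {e : Subring.center B // IsIdempotentElem e})).toEquiv
  have h2 := Nat.card_congr e1
  rw [← Nat.card_coe_set_eq, Nat.card_congr (ciEquiv B), h2, numBlocks, ← Nat.card_congr (blockEquiv B)]
  rw [Nat.card_eq_fintype_card, Nat.card_eq_fintype_card, Fintype.card_set]

lemma CI_finite (F : Type*) [Field F] (B : Type*) [Ring B] [Algebra F B] [Module.Finite F B] :
    (CI B).Finite := by
  have : Module.Finite F (Subalgebra.center F B) := inferInstance
  have : IsArtinianRing (Subalgebra.center F B) := IsArtinianRing.of_finite F _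
  have : Finite (TopologicalSpace.Clopens (PrimeSpectrum (Subalgebra.center F B))) :=
    Finite.of_injective (fun s => (s : Set (PrimeSpectrum (Subalgebra.center F B))))
      SetLike.coe_injective
  have h : Finite {e : Subalgebra.center F B // IsIdempotentElem e} :=
    Finite.of_injective _ (PrimeSpectrum.isIdempotentElemEquivClopens
      (R := Subalgebra.center F B)).toEquiv.injective
  have h' : Finite {e : Subring.center B // IsIdempotentElem e} := h
  exact Finite.of_equiv {e : Subring.center B // IsIdempotentElem e} (ciEquiv B).symm

lemma CI_ncard_congr {B C : Type*} [Ring B] [Ring C] (f : B ≃+* C) :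
    (CI B).ncard = (CI C).ncard := by
  apply Set.ncard_congr (fun b _ => f b)
  · rintro a ⟨h1, h2⟩
    refine ⟨by rw [IsIdempotentElem, ← map_mul, h1], fun x => ?_⟩
    obtain ⟨y, rfl⟩ := f.surjective x
    rw [← map_mul, ← map_mul, h2]
  · intro a b _ _ h
    exact f.injective h
  · rintro b ⟨h1, h2⟩
    obtain ⟨y, rfl⟩ := f.surjective b
    refine ⟨y, ⟨f.injective (by rw [map_mul, h1]), fun x => f.injective ?_⟩, rfl⟩
    rw [map_mul, map_mul, h2]

lemma numBlocks_congr {B C : Type*} [Ring B] [Ring C] (f : B ≃+* C) (hB : (CI B).Finite)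
    (hC : (CI C).Finite) : numBlocks B = numBlocks C := by
  have := CI_ncard_congr f
  rw [card_CI B hB, card_CI C hC] at this
  exact Nat.pow_right_injective le_rfl this

end Counting
section Lifting
open Polynomial

variable {O : Type*} [CommRing O] [IsLocalRing O] {B : Type*} [Ring B] [Algebra O B] [Module.Finite O B]

lemma idem_eq_zero_of_mem (φ : B →ₗ[O] B) (hφ : ∀ b, φ (φ b) = φ b)
    (h : ∀ b, φ b ∈ IsLocalRing.maximalIdeal O • (⊤ : Submodule O B)) : φ = 0 := by
  have hle : LinearMap.range φ ≤ IsLocalRing.maximalIdeal O • LinearMap.range φ := by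
    rintro _ ⟨b, rfl⟩
    have := Submodule.mem_map_of_mem (f := φ) (h b)
    rw [Submodule.map_smul'', Submodule.map_top, hφ] at this
    exact this
  have hfg : (LinearMap.range φ).FG := by
    rw [LinearMap.range_eq_map]
    exact Submodule.FG.map _ Module.Finite.fg_top
  exact LinearMap.range_eq_bot.1 (Submodule.eq_bot_of_le_smul_of_le_jacobson_bot _ _ hfg hle
    (IsLocalRing.maximalIdeal_le_jacobson _))

lemma coprime_mprod_left {ι S : Type*} [CommRing S] (s : Multiset ι) (f : ι → S) (x : S)
    (h : ∀ i ∈ s, IsCoprime (f i) x) : IsCoprime (s.map f).prod x := by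
  induction s using Multiset.induction_on with
  | empty => simpa using isCoprime_one_left
  | cons a s ih =>
    rw [Multiset.map_cons, Multiset.prod_cons]
    exact (h a (Multiset.mem_cons_self a s)).mul_left
      (ih fun i hi => h i (Multiset.mem_cons_of_mem hi))

lemma split_coprime (s : Multiset O) : ∃ f g : O[X],
    (s.map (fun r => X - C r)).prod = f * g ∧ IsCoprime f g ∧
    (∀ r ∈ s, r ∈ IsLocalRing.maximalIdeal O → X - C r ∣ f) ∧
    (∀ r ∈ s, r ∉ IsLocalRing.maximalIdeal O → X - C r ∣ g) := by
  classical
  refine ⟨((s.filter (· ∈ IsLocalRing.maximalIdeal O)).map (fun r => X - C r)).prod,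
    ((s.filter (¬ · ∈ IsLocalRing.maximalIdeal O)).map (fun r => X - C r)).prod, ?_, ?_, ?_, ?_⟩
  · rw [← Multiset.prod_add, ← Multiset.map_add, Multiset.filter_add_not]
  · apply coprime_mprod_left
    intro r hr
    apply IsCoprime.symm
    apply coprime_mprod_left
    intro t ht
    have hr' := (Multiset.mem_filter.1 hr).2
    have ht' := (Multiset.mem_filter.1 ht).2
    have hu : IsUnit (r - t) := by
      by_contra hn
      have h3 : r - t ∈ IsLocalRing.maximalIdeal O := hn
      apply ht'
      have := sub_mem hr' h3
      simpa using this
    obtain ⟨v, hv⟩ := hu.exists_left_inv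
    refine ⟨C v, -C v, ?_⟩
    have : C v * (C r - C t) = 1 := by rw [← C_sub, ← C_mul, hv, C_1]
    linear_combination this
  · intro r hr hm
    exact Multiset.dvd_prod (Multiset.mem_map_of_mem (fun r => X - C r) (Multiset.mem_filter.2 ⟨hr, hm⟩))
  · intro r hr hm
    exact Multiset.dvd_prod (Multiset.mem_map_of_mem (fun r => X - C r) (Multiset.mem_filter.2 ⟨hr, hm⟩))

variable {D : Type*} [Ring D] (π : B →+* D) (hπ : Function.Surjective π)
  (hker : ∀ b, π b = 0 ↔ b ∈ IsLocalRing.maximalIdeal O • (⊤ : Submodule O B))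

include hker in
lemma ci_inj {e f : B} (he : e ∈ CI B) (hf : f ∈ CI B) (h : π e = π f) : e = f := by
  have key : ∀ e ∈ CI B, π e = 0 → e = 0 := by
    intro e he h0
    have := idem_eq_zero_of_mem (O := O) (LinearMap.mulLeft O e)
      (fun b => by simp [← mul_assoc, he.1.eq])
      (fun b => by rw [← hker]; simp [h0])
    simpa using LinearMap.congr_fun this 1
  have h1 : e * (1 - f) = 0 := by
    apply key
    · refine ⟨?_, fun x => ?_⟩
      · have : e * (1 - f) * (e * (1 - f)) = (e * e) * ((1 - f) * (1 - f)) := by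
          rw [mul_assoc, ← mul_assoc (1 - f), ← he.2 (1 - f)]; simp only [mul_assoc]
        rw [IsIdempotentElem, this, he.1.eq, hf.1.one_sub.eq]
      · rw [mul_assoc, ← mul_assoc x, ← he.2 x, mul_assoc e x, sub_mul, mul_sub, hf.2]; simp [mul_sub]
    · rw [map_mul, h, ← map_mul, mul_sub, mul_one, hf.1.eq, sub_self, map_zero]
  have h2 : f * (1 - e) = 0 := by
    apply key
    · refine ⟨?_, fun x => ?_⟩
      · have : f * (1 - e) * (f * (1 - e)) = (f * f) * ((1 - e) * (1 - e)) := by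
          rw [mul_assoc, ← mul_assoc (1 - e), ← hf.2 (1 - e)]; simp only [mul_assoc]
        rw [IsIdempotentElem, this, hf.1.eq, he.1.one_sub.eq]
      · rw [mul_assoc, ← mul_assoc x, ← hf.2 x, mul_assoc f x, sub_mul, mul_sub, he.2]; simp [mul_sub]
    · rw [map_mul, ← h, ← map_mul, mul_sub, mul_one, he.1.eq, sub_self, map_zero]
  rw [mul_sub, mul_one, sub_eq_zero] at h1 h2
  rw [h1, he.2, ← h2]

include hker in
lemma central_of_lift {e : B} (he : IsIdempotentElem e) (hc : ∀ y, π e * y = y * π e) (b : B) :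
    e * b = b * e := by
  have aux : ∀ e f : B, e * e = e → f * f = f → (∀ b, π (e * b * f) = 0) → ∀ b, e * b * f = 0 := by
    intro e f he hf h b
    have := idem_eq_zero_of_mem (O := O) ((LinearMap.mulLeft O e).comp (LinearMap.mulRight O f))
      (fun b => by simp [mul_assoc, hf]; simp [← mul_assoc, he])
      (fun b => by rw [← hker]; simp only [LinearMap.comp_apply, LinearMap.mulLeft_apply,
        LinearMap.mulRight_apply]; rw [← mul_assoc]; exact h b)
    have h2 := LinearMap.congr_fun this b
    simpa [← mul_assoc] using h2
  have h1 := aux e (1 - e) he he.one_sub (fun b => by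
    rw [map_mul, map_mul, mul_assoc, hc, mul_assoc, ← map_mul, sub_mul, one_mul, he.eq]; simp) b
  have h2 := aux (1 - e) e he.one_sub he (fun b => by
    rw [map_mul, map_mul, mul_assoc, ← hc, ← mul_assoc, ← map_mul, sub_mul, one_mul, he.eq]; simp) b
  rw [mul_sub, mul_one, sub_eq_zero] at h1
  rw [sub_mul, one_mul, sub_mul, sub_eq_zero] at h2
  rw [h1, h2]

include hπ hker in
lemma ci_lift (hsplit : ∀ p : O[X], p.Monic → ∃ s : Multiset O, p = (s.map (fun r => X - C r)).prod)
    {e₀ : D} (he₀ : e₀ ∈ CI D) : ∃ e ∈ CI B, π e = e₀ := by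
  obtain ⟨x, rfl⟩ := hπ e₀
  obtain ⟨p, hp, hpx⟩ := (Algebra.IsIntegral.isIntegral (R := O) x)
  obtain ⟨s, rfl⟩ := hsplit p hp
  obtain ⟨f, g, hfg, ⟨u, v, huv⟩, hf, hg⟩ := split_coprime (0 ::ₘ 1 ::ₘ s)
  have hf0 := hf 0 (by simp) (by simp)
  have hg1 := hg 1 (by simp) (by simp)
  have hfgx : aeval x (f * g) = 0 := by
    rw [← hfg]
    simp only [Multiset.map_cons, Multiset.prod_cons, map_mul]
    rw [← aeval_def] at hpx
    rw [hpx]; simp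
  have hid : IsIdempotentElem (aeval x (u * f)) := by
    rw [IsIdempotentElem, ← map_mul]
    have : u * f * (u * f) = u * f - (u * v) * (f * g) := by linear_combination (u * f) * huv
    rw [this, map_sub, map_mul _ (u*v), hfgx, mul_zero, sub_zero]
  have hred : π (aeval x (u * f)) = π x := by
    obtain ⟨f', hf'⟩ := hf0
    obtain ⟨g', hg'⟩ := hg1
    have e1 : π (aeval x (u * f)) = π x * π (aeval x (u * f')) := by
      rw [← map_mul, show u * f = X * (u * f') by rw [hf', C_0]; ring, map_mul (aeval x) X, aeval_X]
    have e2 : 1 - π (aeval x (u * f)) = (π x - 1) * π (aeval x (v * g')) := by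
      have : (1 : B) - aeval x (u * f) = (x - 1) * aeval x (v * g') := by
        have h3 : (1 : O[X]) - u * f = (X - 1) * (v * g') := by
          rw [C_1] at hg'
          linear_combination -huv + v * hg'
        have := congrArg (aeval x) h3
        simpa using this
      rw [← map_one π, ← map_sub, this, map_mul, map_sub]
    have hxx : π x * π x = π x := he₀.1
    have e3 : π x * (1 - π (aeval x (u * f))) = 0 := by
      rw [e2, ← mul_assoc, mul_sub, mul_one, hxx, sub_self, zero_mul]
    have e4 : (1 - π x) * π (aeval x (u * f)) = 0 := by
      rw [e1, ← mul_assoc, sub_mul, one_mul, hxx, sub_self, zero_mul]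
    rw [mul_sub, mul_one, sub_eq_zero] at e3
    rw [sub_mul, one_mul, sub_eq_zero] at e4
    rw [e4, ← e3]
  refine ⟨_, ⟨hid, ?_⟩, hred⟩
  apply central_of_lift π hker hid
  rw [hred]; exact he₀.2

end Lifting
section Tensor
open Polynomial

lemma split_of_intClosed (O : Type*) [CommRing O] [IsDomain O] [IsIntegrallyClosed O]
    (L : Type*) [Field L] [IsAlgClosed L] [Algebra O L] [IsFractionRing O L] :
    ∀ p : O[X], p.Monic → ∃ s : Multiset O, p = (s.map (fun r => X - C r)).prod := by
  intro p hp
  induction hn : p.natDegree generalizing p with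
  | zero =>
    refine ⟨0, ?_⟩
    simpa using hp.natDegree_eq_zero.1 hn
  | succ n ih =>
    have hd : (p.map (algebraMap O L)).degree ≠ 0 := by
      rw [hp.degree_map]
      intro h
      rw [natDegree_eq_of_degree_eq_some h] at hn
      simp at hn
    obtain ⟨x, hx⟩ := IsAlgClosed.exists_root _ hd
    have hint : IsIntegral O x := ⟨p, hp, by rwa [IsRoot.def, eval_map] at hx⟩
    obtain ⟨r, rfl⟩ := IsIntegrallyClosed.isIntegral_iff.1 hint
    have hr : p.IsRoot r := by
      rw [IsRoot.def, eval_map_algebraMap, aeval_algebraMap_apply] at hx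
      exact (FaithfulSMul.algebraMap_injective O L) (by simpa using hx)
    obtain ⟨q, rfl⟩ := dvd_iff_isRoot.2 hr
    have hq : q.Monic := (monic_X_sub_C r).of_mul_monic_left hp
    obtain ⟨s, hs⟩ := ih q hq (by rw [(monic_X_sub_C r).natDegree_mul hq, natDegree_X_sub_C] at hn; omega)
    refine ⟨r ::ₘ s, ?_⟩
    rw [Multiset.map_cons, Multiset.prod_cons, ← hs]

variable {R : Type*} [CommRing R] {A : Type*} [Ring A] [Algebra R A]

lemma ker_tensor {O κ : Type*} [CommRing O] [IsLocalRing O] [Algebra R O] [Field κ] [Algebra R κ]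
    (ψ : O →ₐ[R] κ) (hψ : Function.Surjective ψ) (b : O ⊗[R] A) :
    Algebra.TensorProduct.map ψ (AlgHom.id R A) b = 0 ↔
      b ∈ IsLocalRing.maximalIdeal O • (⊤ : Submodule O (O ⊗[R] A)) := by
  have hm : RingHom.ker ψ.toRingHom = IsLocalRing.maximalIdeal O :=
    IsLocalRing.eq_maximalIdeal (RingHom.ker_isMaximal_of_surjective ψ.toRingHom hψ)
  constructor
  · intro hb
    have hex : Function.Exact (LinearMap.ker ψ.toLinearMap).subtype ψ.toLinearMap :=
      LinearMap.exact_subtype_ker_map _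
    have := rTensor_exact A hex hψ
    obtain ⟨c, rfl⟩ := (this b).1 hb
    clear hb
    induction c with
    | zero => simp
    | add x y hx hy => rw [map_add]; exact add_mem hx hy
    | tmul z a =>
      have hz : (z : O) ∈ IsLocalRing.maximalIdeal O := by
        rw [← hm]; exact z.2
      have : (LinearMap.rTensor A (LinearMap.ker ψ.toLinearMap).subtype) (z ⊗ₜ a) =
          (z : O) • ((1 : O) ⊗ₜ[R] a) := by
        simp [TensorProduct.smul_tmul']
      rw [this]
      exact Submodule.smul_mem_smul hz trivial
  · intro hb
    refine Submodule.smul_induction_on hb ?_ ?_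
    · intro r hr n _
      have h0 : ψ r = 0 := by
        have : r ∈ RingHom.ker ψ.toRingHom := hm ▸ hr
        exact this
      rw [Algebra.smul_def, map_mul]
      simp [Algebra.TensorProduct.algebraMap_apply, h0]
    · intro x y hx hy
      rw [map_add, hx, hy, add_zero]

lemma central_iff {S : Type*} [CommRing S] [Algebra R S] (x : S ⊗[R] A) :
    (∀ y, x * y = y * x) ↔ ∀ a : A, x * (1 ⊗ₜ a) = (1 ⊗ₜ a) * x := by
  refine ⟨fun h a => h _, fun h y => ?_⟩
  induction y with
  | zero => simp
  | add a b ha hb => rw [mul_add, add_mul, ha, hb]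
  | tmul s a =>
    have : s ⊗ₜ[R] a = s • ((1 : S) ⊗ₜ[R] a) := by simp [TensorProduct.smul_tmul']
    rw [this, mul_smul_comm, smul_mul_assoc, h]

lemma ci_count [Module.Finite R A] [Module.Flat R A]
    {O L κ : Type*} [CommRing O] [IsDomain O] [IsLocalRing O] [IsIntegrallyClosed O] [Algebra R O]
    [Field L] [IsAlgClosed L] [Algebra O L] [IsFractionRing O L] [Algebra R L] [IsScalarTower R O L]
    [Field κ] [Algebra R κ] (ψ : O →ₐ[R] κ) (hψ : Function.Surjective ψ) :
    (CI (κ ⊗[R] A)).ncard = {e | e ∈ CI (L ⊗[R] A) ∧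
      e ∈ Set.range (Algebra.TensorProduct.map (IsScalarTower.toAlgHom R O L) (AlgHom.id R A))}.ncard := by
  have h1 : (CI (O ⊗[R] A)).ncard = (CI (κ ⊗[R] A)).ncard := by
    have hs : Function.Surjective (Algebra.TensorProduct.map ψ (AlgHom.id R A)) :=
      TensorProduct.map_surjective hψ Function.surjective_id
    apply Set.ncard_congr (fun b _ => Algebra.TensorProduct.map ψ (AlgHom.id R A) b)
    · rintro a ⟨h1, h2⟩
      refine ⟨by rw [IsIdempotentElem, ← map_mul, h1], fun x => ?_⟩
      obtain ⟨y, rfl⟩ := hs x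
      rw [← map_mul, ← map_mul, h2]
    · intro a b ha hb h
      exact ci_inj (O := O) (Algebra.TensorProduct.map ψ (AlgHom.id R A)).toRingHom
        (ker_tensor ψ hψ) ha hb h
    · intro b hb
      obtain ⟨e, he, h⟩ := ci_lift (O := O) (Algebra.TensorProduct.map ψ (AlgHom.id R A)).toRingHom hs
        (ker_tensor ψ hψ) (split_of_intClosed O L) hb
      exact ⟨e, he, h⟩
  rw [← h1]
  have hinj : Function.Injective
      (Algebra.TensorProduct.map (IsScalarTower.toAlgHom R O L) (AlgHom.id R A)) :=
    Module.Flat.rTensor_preserves_injective_linearMap (IsScalarTower.toAlgHom R O L).toLinearMap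
      (FaithfulSMul.algebraMap_injective O L)
  apply Set.ncard_congr (fun b _ => Algebra.TensorProduct.map (IsScalarTower.toAlgHom R O L) (AlgHom.id R A) b)
  · rintro a ⟨h1, h2⟩
    refine ⟨⟨by rw [IsIdempotentElem, ← map_mul, h1], ?_⟩, ⟨a, rfl⟩⟩
    rw [central_iff]
    intro x
    have := congrArg (Algebra.TensorProduct.map (IsScalarTower.toAlgHom R O L) (AlgHom.id R A)) (h2 (1 ⊗ₜ x))
    simpa using this
  · intro a b _ _ h
    exact hinj h
  · rintro _ ⟨⟨h1, h2⟩, ⟨b, rfl⟩⟩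
    refine ⟨b, ⟨hinj ?_, fun x => hinj ?_⟩, rfl⟩
    · rw [map_mul, h1]
    · rw [map_mul, map_mul, h2]

lemma exists_coords (L : Type*) [Field L] [Algebra R L] [Module.Finite R A] [Module.Projective R A] :
    ∃ (n : ℕ) (c : Fin n → L ⊗[R] A → L), ∀ (O : Type*) [CommRing O] [Algebra R O] [Algebra O L]
      [IsScalarTower R O L] (e : L ⊗[R] A),
      e ∈ Set.range (Algebra.TensorProduct.map (IsScalarTower.toAlgHom R O L) (AlgHom.id R A)) ↔
        ∀ i, c i e ∈ Set.range (algebraMap O L) := by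
  obtain ⟨n, f, g, -, -, hfg⟩ := Module.Finite.exists_comp_eq_id_of_projective R A
  let φ : Fin n → A →ₗ[R] R := fun i => (LinearMap.proj i).comp g
  let a : Fin n → A := fun i => f fun j => if i = j then 1 else 0
  have ha : ∀ x, x = ∑ i, φ i x • a i := by
    intro x
    conv_lhs => rw [← LinearMap.id_apply (R := R) x, ← hfg, LinearMap.comp_apply]
    rw [LinearMap.pi_apply_eq_sum_univ f (g x)]
    rfl
  let c : Fin n → L ⊗[R] A →ₗ[R] L := fun i =>
    (TensorProduct.rid R L).toLinearMap.comp (LinearMap.lTensor L (φ i))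
  have hc : ∀ e, e = ∑ i, c i e ⊗ₜ[R] a i := by
    intro e
    induction e with
    | zero => simp
    | add x y hx hy => simp only [map_add, TensorProduct.add_tmul, Finset.sum_add_distrib, ← hx, ← hy]
    | tmul l x =>
      conv_lhs => rw [ha x]
      simp [c, TensorProduct.tmul_sum, TensorProduct.smul_tmul]
  refine ⟨n, fun i => c i, ?_⟩
  intro O _ _ _ _ e
  constructor
  · rintro ⟨b, rfl⟩ i
    induction b with
    | zero => exact ⟨0, by simp⟩
    | add x y hx hy =>
      obtain ⟨u, hu⟩ := hx
      obtain ⟨v, hv⟩ := hy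
      exact ⟨u + v, by simp only [map_add, hu, hv]⟩
    | tmul o x =>
      refine ⟨φ i x • o, ?_⟩
      simp [c, Algebra.smul_def, ← IsScalarTower.algebraMap_apply]
  · intro h
    choose o ho using h
    refine ⟨∑ i, o i ⊗ₜ a i, ?_⟩
    rw [hc e, map_sum]
    simp [ho]
end Tensor
section Purity

def H1 {R : Type*} [CommRing R] (p : Ideal R) : Prop :=
  p ≠ ⊥ ∧ ∀ p' : Ideal R, p'.IsPrime → p' < p → p' = ⊥

lemma H1.height {R : Type*} [CommRing R] [IsDomain R] (p : PrimeSpectrum R) (h : H1 p.asIdeal) :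
    Order.height p = 1 := by
  rw [← PrimeSpectrum.height_eq_orderHeight]
  apply le_antisymm
  · have := (Ideal.height_le_iff (p := p.asIdeal) (n := 1)).2 (fun q hq hlt => by
      rw [h.2 q hq hlt]; simp)
    simpa using this
  · rw [Order.one_le_iff_ne_zero]
    intro h0
    exact h.1 (Ideal.height_eq_zero_iff_eq_bot.1 h0)

lemma H1_of_le {R : Type*} [CommRing R] [IsDomain R] (p : Ideal R) [p.IsPrime] (hb : p ≠ ⊥)
    (h : p.height ≤ 1) : H1 p := by
  refine ⟨hb, fun p' hp' hlt => ?_⟩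
  have := (Ideal.height_le_iff (p := p) (n := 1)).1 (by simpa using h) p' hp' hlt
  rw [Nat.cast_one, Order.lt_one_iff] at this
  exact Ideal.height_eq_zero_iff_eq_bot.1 this

lemma purity0 {S E : Type*} [CommRing S] [IsDomain S] [IsNoetherianRing S] [IsIntegrallyClosed S]
    [Field E] [Algebra S E] [IsFractionRing S E] (c : E) (Q : Ideal S) [Q.IsPrime]
    (hQ : ∀ s : S, (∃ a : S, algebraMap S E s * c = algebraMap S E a) → s ∈ Q) :
    ∃ q : Ideal S, q.IsPrime ∧ q ≤ Q ∧ H1 q ∧ ∃ t z w : S, z ∈ q ∧ w ∉ q ∧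
      algebraMap S E t * c * algebraMap S E z = algebraMap S E w := by
  have hinj := FaithfulSMul.algebraMap_injective S E
  let I : Ideal S :=
    { carrier := {s | ∃ a : S, algebraMap S E s * c = algebraMap S E a}
      zero_mem' := ⟨0, by simp⟩
      add_mem' := by
        rintro x y ⟨a, ha⟩ ⟨b, hb⟩
        exact ⟨a + b, by rw [map_add, add_mul, ha, hb, map_add]⟩
      smul_mem' := by
        rintro r x ⟨a, ha⟩
        exact ⟨r * a, by rw [smul_eq_mul, map_mul, mul_assoc, ha, map_mul]⟩ }
  have hIQ : I ≤ Q := fun s hs => hQ s hs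
  obtain ⟨q, hq, hqQ⟩ := Ideal.exists_minimalPrimes_le hIQ
  have hqp : q.IsPrime := hq.isPrime
  have hIq : I ≤ q := hq.1.2
  have hcol : Submodule.colon I {(1 : S)} = I := by
    ext s; rw [Submodule.mem_colon_singleton]; simp
  rw [← hcol] at hq
  obtain ⟨t, ht⟩ := Submodule.exists_eq_colon_of_mem_minimalPrimes hq
  have hmem : ∀ s, s ∈ q ↔ ∃ a : S, algebraMap S E s * (algebraMap S E t * c) = algebraMap S E a := by
    intro s
    rw [ht, Submodule.mem_colon_singleton, smul_eq_mul]
    change (∃ a : S, algebraMap S E (s * t) * c = algebraMap S E a) ↔ _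
    simp [map_mul, mul_assoc]
  have hqb : q ≠ ⊥ := by
    intro hb
    obtain ⟨a, b, hb0, rfl⟩ := IsFractionRing.div_surjective (A := S) c
    have : b ∈ I := ⟨a, by
      have : algebraMap S E b ≠ 0 := by
        intro h0; exact nonZeroDivisors.ne_zero hb0 (hinj (by simpa using h0))
      field_simp⟩
    have := hIq this
    rw [hb, Ideal.mem_bot] at this
    exact nonZeroDivisors.ne_zero hb0 this
  have hex : ∃ z w : S, z ∈ q ∧ w ∉ q ∧
      algebraMap S E t * c * algebraMap S E z = algebraMap S E w := by
    by_contra hcon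
    push Not at hcon
    set y := algebraMap S E t * c with hy
    have hint : IsIntegral S y := by
      refine isIntegral_of_smul_mem_submodule (M := E) (Submodule.map (Algebra.linearMap S E) q) ?_ ?_ y ?_
      · intro hb
        apply hqb
        rw [eq_bot_iff]
        intro s hs
        have : algebraMap S E s ∈ Submodule.map (Algebra.linearMap S E) q := ⟨s, hs, rfl⟩
        rw [hb, Submodule.mem_bot] at this
        exact hinj (by simpa using this)
      · exact Submodule.FG.map _ (IsNoetherian.noetherian q)
      · rintro _ ⟨s, hs, rfl⟩
        obtain ⟨a, ha⟩ := (hmem s).1 hs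
        refine ⟨a, ?_, ?_⟩
        · by_contra ha'
          exact hcon s a hs ha' (by rw [mul_comm, ha])
        · simp only [Algebra.linearMap_apply, smul_eq_mul]
          rw [← ha, mul_comm]
    obtain ⟨a, ha⟩ := IsIntegrallyClosed.isIntegral_iff.1 hint
    apply hqp.ne_top
    rw [Ideal.eq_top_iff_one, hmem]
    exact ⟨a, by rw [map_one, one_mul, ha]⟩
  obtain ⟨z, w, hz, hw, hzw⟩ := hex
  refine ⟨q, hqp, hqQ, H1_of_le q hqb ?_, t, z, w, hz, hw, hzw⟩
  apply Ideal.height_le_one_of_isPrincipal_of_mem_minimalPrimes (Ideal.span {z})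
  refine ⟨⟨hqp, by rwa [Ideal.span_singleton_le_iff_mem]⟩, ?_⟩
  rintro q' ⟨hq', hzq'⟩ hle s hs
  rw [Ideal.span_singleton_le_iff_mem] at hzq'
  obtain ⟨a, ha⟩ := (hmem s).1 hs
  have h1 : s * w = a * z := hinj (by rw [map_mul, map_mul, ← hzw, ← ha]; ring)
  have h2 : s * w ∈ q' := h1 ▸ q'.mul_mem_left a hzq'
  exact (hq'.mem_or_mem h2).resolve_right (fun h => hw (hle h))

lemma H1_under {P S : Type*} [CommRing P] [IsDomain P] [IsIntegrallyClosed P] [CommRing S] [IsDomain S]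
    [Algebra P S] [FaithfulSMul P S] [Algebra.IsIntegral P S] (q : Ideal S) [q.IsPrime] (h : H1 q) :
    H1 (q.under P) := by
  refine ⟨fun hb => h.1 (Ideal.eq_bot_of_comap_eq_bot hb), fun p' hp' hlt => ?_⟩
  obtain ⟨q', hq'lt, hq', hover⟩ := Ideal.exists_ideal_lt_liesOver_of_lt (p := p') q hlt
  have := h.2 q' hq' hq'lt
  subst this
  rw [hover.over]
  ext x
  simp [Ideal.under_def]

lemma H1_of_under {P S : Type*} [CommRing P] [CommRing S] [IsDomain P] [IsDomain S]
    [Algebra P S] [FaithfulSMul P S] [Algebra.IsIntegral P S] (q : Ideal S) [q.IsPrime]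
    (h : H1 (q.under P)) : H1 q := by
  refine ⟨fun hb => h.1 ?_, fun q' hq' hlt => ?_⟩
  · subst hb; ext x
    simp [Ideal.under_def]
  · exact Ideal.eq_bot_of_comap_eq_bot (h.2 _ (hq'.under P) (Ideal.IsIntegral.comap_lt_comap hlt))

lemma purity1 {P F L T : Type*} [CommRing P] [IsDomain P] [IsNoetherianRing P] [IsIntegrallyClosed P]
    [Field F] [Algebra P F] [IsFractionRing P F] [Field L] [Algebra F L] [Algebra P L]
    [IsScalarTower P F L] [Algebra.IsAlgebraic F L] [CommRing T] [IsDomain T] [Algebra P T]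
    [Algebra T L] [IsScalarTower P T L] [IsIntegralClosure T P L]
    (c : L) (Q : Ideal T) [Q.IsPrime]
    (hQ : ∀ s : T, (∃ a : T, algebraMap T L s * c = algebraMap T L a) → s ∈ Q) :
    ∃ q : Ideal T, q.IsPrime ∧ q ≤ Q ∧ H1 (q.under P) ∧
      ∀ s : T, (∃ a : T, algebraMap T L s * c = algebraMap T L a) → s ∈ q := by
  have hTinj : Function.Injective (algebraMap T L) := IsIntegralClosure.algebraMap_injective T P L
  have : Algebra.IsIntegral P T := IsIntegralClosure.isIntegral_algebra P L
  obtain ⟨n, hn⟩ := (isPurelyInseparable_iff_pow_mem (separableClosure F L)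
    (ringExpChar (separableClosure F L))).1 inferInstance c
  set N := ringExpChar (separableClosure F L) ^ n with hN
  have hN0 : N ≠ 0 := pow_ne_zero _ (expChar_pos (separableClosure F L) (ringExpChar _)).ne'
  have hsep : IsSeparable F (c ^ N) := by
    obtain ⟨d, hd⟩ := hn
    rw [← hd]
    exact mem_separableClosure_iff.1 d.2
  let E := IntermediateField.adjoin F {c ^ N}
  have : FiniteDimensional F E :=
    IntermediateField.adjoin.finiteDimensional hsep.isIntegral
  have : Algebra.IsSeparable F E := (IntermediateField.isSeparable_adjoin_simple_iff_isSeparable F L).2 hsep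
  let S := integralClosure P E
  have : IsScalarTower P F E := inferInstance
  have : IsNoetherianRing S := IsIntegralClosure.isNoetherianRing P F E S
  have : IsIntegrallyClosed S := integralClosure.isIntegrallyClosedOfFiniteExtension F
  have : IsFractionRing S E := integralClosure.isFractionRing_of_finite_extension F E
  have : IsScalarTower P E L := IsScalarTower.of_algebraMap_eq fun x => by
    rw [IsScalarTower.algebraMap_apply P F L, IsScalarTower.algebraMap_apply P F E,
      ← IsScalarTower.algebraMap_apply F E L]
  have : IsScalarTower P S L := inferInstance
  have : Algebra.IsIntegral P S := inferInstance
  let j : S →ₐ[P] T := IsIntegralClosure.lift P T L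
  let : Algebra S T := j.toRingHom.toAlgebra
  have hj : ∀ s : S, algebraMap T L (algebraMap S T s) = algebraMap S L s := fun s =>
    IsIntegralClosure.algebraMap_lift P T L s
  have : IsScalarTower P S T := IsScalarTower.of_algebraMap_eq fun x => (j.commutes x).symm
  have : Algebra.IsIntegral S T := Algebra.IsIntegral.tower_top P
  have hSL : Function.Injective (algebraMap S L) := by
    rw [IsScalarTower.algebraMap_eq S E L]
    exact (algebraMap E L).injective.comp Subtype.val_injective
  have : FaithfulSMul S T := (faithfulSMul_iff_algebraMap_injective S T).2 fun x y h =>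
    hSL (by rw [← hj, ← hj, h])
  have : FaithfulSMul P S := by
    rw [faithfulSMul_iff_algebraMap_injective]
    intro x y h
    have h2 := congrArg (algebraMap S E) h
    rw [← IsScalarTower.algebraMap_apply P S E, ← IsScalarTower.algebraMap_apply P S E,
      IsScalarTower.algebraMap_apply P F E, IsScalarTower.algebraMap_apply P F E] at h2
    exact IsFractionRing.injective P F ((algebraMap F E).injective h2)
  let c' : E := ⟨c ^ N, IntermediateField.mem_adjoin_simple_self F _⟩
  have hc' : algebraMap E L c' = c ^ N := rfl
  have hpow : ∀ y : L, (∃ a : T, y ^ N = algebraMap T L a) → ∃ a : T, y = algebraMap T L a := by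
    rintro y ⟨a, ha⟩
    have h1 : IsIntegral P (y ^ N) := ha ▸ (IsIntegralClosure.isIntegral P L a).map (IsScalarTower.toAlgHom P T L)
    have h2 : IsIntegral P y := IsIntegral.of_pow (Nat.pos_of_ne_zero hN0) h1
    obtain ⟨b, hb⟩ := (IsIntegralClosure.isIntegral_iff (A := T)).1 h2
    exact ⟨b, hb.symm⟩
  obtain ⟨q', hq'p, hq'Q, hq'1, t, z, w, hz, hw, hzw⟩ := purity0 c' (Q.under S) (by
    rintro s ⟨a, ha⟩
    change algebraMap S T s ∈ Q
    apply hQ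
    obtain ⟨b, hb⟩ := hpow (algebraMap T L (algebraMap S T s) * c)
      ⟨algebraMap S T s ^ (N - 1) * algebraMap S T a, by
        rw [map_mul, map_pow, hj, hj, IsScalarTower.algebraMap_apply S E L a, ← ha, map_mul, hc',
          ← IsScalarTower.algebraMap_apply S E L, mul_pow, ← mul_assoc, ← pow_succ,
          Nat.sub_add_cancel (Nat.pos_of_ne_zero hN0)]⟩
    exact ⟨b, hb⟩)
  obtain ⟨q, hqQ, hqp, hqo⟩ := Ideal.exists_ideal_le_liesOver_of_le (p := q') Q hq'Q
  refine ⟨q, hqp, hqQ, ?_, ?_⟩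
  · have := H1_under (P := P) q' hq'1
    rwa [hqo.over, Ideal.under_under] at this
  · rintro s ⟨a, ha⟩
    have hzq : algebraMap S T z ∈ q := by
      have h : z ∈ q.under S := hqo.over ▸ hz
      exact h
    have hwq : algebraMap S T w ∉ q := by
      intro h
      exact hw (by rw [hqo.over]; exact h)
    have hL : algebraMap S L t * c ^ N * algebraMap S L z = algebraMap S L w := by
      have := congrArg (algebraMap E L) hzw
      simpa only [map_mul, hc', ← IsScalarTower.algebraMap_apply S E L] using this
    have key : s ^ N * algebraMap S T w = (a ^ N * algebraMap S T t) * algebraMap S T z := by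
      apply hTinj
      rw [map_mul, map_mul, map_mul, map_pow, map_pow, hj, hj, hj, ← hL, ← ha]
      ring
    have : s ^ N * algebraMap S T w ∈ q := key ▸ q.mul_mem_left _ hzq
    exact hqp.mem_of_pow_mem _ ((hqp.mem_or_mem this).resolve_right hwq)

end Purity
section Final

def Dom {T L : Type*} [CommRing T] [Field L] [Algebra T L] (c : L) (Q : Ideal T) : Prop :=
  ∃ s : T, s ∉ Q ∧ ∃ a : T, algebraMap T L s * c = algebraMap T L a

lemma purity2 (k : Type*) [Field k] {R L T : Type*} [CommRing R] [IsDomain R] [Algebra k R]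
    [Algebra.FiniteType k R] [Field L] [Algebra R L] [FaithfulSMul R L] [Algebra.IsAlgebraic R L]
    [CommRing T] [IsDomain T] [Algebra R T]
    [Algebra T L] [IsScalarTower R T L] [IsIntegralClosure T R L]
    (c : L) (Q : Ideal T) [Q.IsPrime] (hQ : ¬ Dom c Q) :
    ∃ q : Ideal T, q.IsPrime ∧ q ≤ Q ∧ H1 (q.under R) ∧ ¬ Dom c q := by
  obtain ⟨s, g, hg, hgi⟩ := exists_integral_inj_algHom_of_fg k R
  let P := MvPolynomial (Fin s) k
  let : Algebra P R := g.toRingHom.toAlgebra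
  have : Algebra.IsIntegral P R := ⟨hgi⟩
  have : FaithfulSMul P R := (faithfulSMul_iff_algebraMap_injective P R).2 hg
  let : Algebra P T := ((algebraMap R T).comp (algebraMap P R)).toAlgebra
  let : Algebra P L := ((algebraMap R L).comp (algebraMap P R)).toAlgebra
  have : IsScalarTower P R T := IsScalarTower.of_algebraMap_eq fun x => rfl
  have : IsScalarTower P R L := IsScalarTower.of_algebraMap_eq fun x => rfl
  have : IsScalarTower P T L := IsScalarTower.of_algebraMap_eq fun x => by
    rw [IsScalarTower.algebraMap_apply P R L, IsScalarTower.algebraMap_apply P R T,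
      ← IsScalarTower.algebraMap_apply R T L]
  have : FaithfulSMul P L := (faithfulSMul_iff_algebraMap_injective P L).2
    ((FaithfulSMul.algebraMap_injective R L).comp hg)
  let F := FractionRing P
  let : Algebra F L := FractionRing.liftAlgebra P L
  have : IsScalarTower P F L := FractionRing.isScalarTower_liftAlgebra P L
  have : Algebra.IsAlgebraic P L := Algebra.IsAlgebraic.trans P R L
  have : Algebra.IsAlgebraic F L := (IsFractionRing.comap_isAlgebraic_iff (A := P) (K := F)).1 this
  have : IsIntegralClosure T P L :=
    { algebraMap_injective := IsIntegralClosure.algebraMap_injective T R L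
      isIntegral_iff := by
        intro x
        rw [← IsIntegralClosure.isIntegral_iff (A := T) (R := R)]
        exact ⟨fun h => h.tower_top, fun h => isIntegral_trans x h⟩ }
  obtain ⟨q, hq, hqQ, h1, h2⟩ := purity1 (P := P) (F := F) c Q (fun s hs => by
    by_contra hsQ
    exact hQ ⟨s, hsQ, hs⟩)
  refine ⟨q, hq, hqQ, ?_, fun ⟨s, hs, h⟩ => hs (h2 s h)⟩
  apply H1_of_under (P := P)
  rwa [Ideal.under_under]

lemma exists_psi (k : Type*) [Field k] [IsAlgClosed k] {R T : Type*} [CommRing R] [Algebra k R]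
    [Algebra.FiniteType k R] [CommRing T] [Algebra R T] [Algebra.IsIntegral R T]
    (p : Ideal R) [p.IsMaximal] (Q : Ideal T) [Q.IsPrime] (hQ : Q.under R = p) :
    ∃ ψ : T →ₐ[R] p.ResidueField, Function.Surjective ψ ∧ ∀ t, ψ t = 0 ↔ t ∈ Q := by
  let : Algebra k T := ((algebraMap R T).comp (algebraMap k R)).toAlgebra
  have : IsScalarTower k R T := IsScalarTower.of_algebraMap_eq fun x => rfl
  have : Q.LiesOver p := ⟨hQ.symm⟩
  let : Field (R ⧸ p) := Ideal.Quotient.field p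
  have h1 : Module.Finite k (R ⧸ p) := finite_of_finite_type_of_isJacobsonRing k (R ⧸ p)
  have h2 : Algebra.IsIntegral (R ⧸ p) (T ⧸ Q) := inferInstance
  have : IsScalarTower k (R ⧸ p) (T ⧸ Q) := IsScalarTower.of_algebraMap_eq fun x => rfl
  have h3 : Algebra.IsIntegral k (T ⧸ Q) := Algebra.IsIntegral.trans (R ⧸ p)
  have h4 := IsAlgClosed.algebraMap_bijective_of_isIntegral (k := k) (K := T ⧸ Q)
  let φ : R →ₐ[R] T ⧸ Q := Algebra.ofId R _
  have hφ : Function.Surjective φ := fun x => by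
    obtain ⟨y, rfl⟩ := h4.2 x
    exact ⟨algebraMap k R y, rfl⟩
  have hker : ∀ r, φ r = 0 ↔ r ∈ p := fun r => by
    rw [← hQ]
    exact Ideal.Quotient.eq_zero_iff_mem
  let χ := (Ideal.quotientKerAlgEquivOfSurjective hφ).symm
  let θ : R ⧸ (RingHom.ker φ) →ₐ[R] p.ResidueField :=
    Ideal.Quotient.liftₐ _ (Algebra.ofId R p.ResidueField) (fun a ha => by
      have := (hker a).1 ha
      exact (Ideal.algebraMap_residueField_eq_zero).2 this)
  have hθs : Function.Surjective θ := by
    intro x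
    obtain ⟨r, rfl⟩ := p.algebraMap_residueField_surjective x
    exact ⟨Ideal.Quotient.mk _ r, rfl⟩
  have hθ0 : ∀ x, θ x = 0 ↔ x = 0 := by
    intro x
    obtain ⟨r, rfl⟩ := Ideal.Quotient.mk_surjective x
    change algebraMap R p.ResidueField r = 0 ↔ _
    rw [Ideal.algebraMap_residueField_eq_zero, Ideal.Quotient.eq_zero_iff_mem, ← hker]
    rfl
  refine ⟨θ.comp (χ.toAlgHom.comp (Ideal.Quotient.mkₐ R Q)), ?_, ?_⟩
  · exact hθs.comp (χ.surjective.comp (Ideal.Quotient.mkₐ_surjective R Q))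
  · intro t
    change θ (χ (Ideal.Quotient.mk Q t)) = 0 ↔ _
    rw [hθ0, map_eq_zero_iff _ χ.injective, Ideal.Quotient.eq_zero_iff_mem]

lemma count_fiber (k : Type*) [Field k] [IsAlgClosed k] {R L T A : Type*} [CommRing R] [IsDomain R]
    [Algebra k R] [Algebra.FiniteType k R]
    [Ring A] [Algebra R A] [Module.Finite R A] [Module.Flat R A]
    [Field L] [IsAlgClosed L] [Algebra R L] [FaithfulSMul R L] [Algebra.IsAlgebraic R L]
    [CommRing T] [IsDomain T] [Algebra R T]
    [Algebra T L] [IsScalarTower R T L] [IsIntegralClosure T R L] [IsFractionRing T L]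
    [IsIntegrallyClosed T]
    (n : ℕ) (c : Fin n → L ⊗[R] A → L)
    (hc : ∀ (O : Subalgebra T L) (e : L ⊗[R] A),
      e ∈ Set.range (Algebra.TensorProduct.map (IsScalarTower.toAlgHom R O L) (AlgHom.id R A)) ↔
        ∀ i, c i e ∈ Set.range (algebraMap O L))
    (p : PrimeSpectrum R) (hp : IsClosed ({p} : Set (PrimeSpectrum R)))
    (Q : Ideal T) [Q.IsPrime] (hQ : Q.under R = p.asIdeal) :
    2 ^ numBlocks (resFieldAt R p ⊗[R] A) =
      {e | e ∈ CI (L ⊗[R] A) ∧ ∀ i, Dom (c i e) Q}.ncard := by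
  have : p.asIdeal.IsMaximal := (PrimeSpectrum.isClosed_singleton_iff_isMaximal p).1 hp
  have : Algebra.IsIntegral R T := IsIntegralClosure.isIntegral_algebra R L
  obtain ⟨ψ₀, hs, h0⟩ := exists_psi k p.asIdeal Q hQ
  have hle := Q.primeCompl_le_nonZeroDivisors
  let O := Localization.subalgebra.ofField L Q.primeCompl hle
  have hloc : IsLocalization.AtPrime O Q := Localization.subalgebra.isLocalization_ofField L _ hle
  have : IsLocalRing O := IsLocalization.AtPrime.isLocalRing O Q
  have : IsIntegrallyClosed O := isIntegrallyClosed_of_isLocalization O Q.primeCompl hle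
  have hTinj := IsIntegralClosure.algebraMap_injective T R L
  have hunit : ∀ y : Q.primeCompl, IsUnit (ψ₀ y) := fun y => by
    rw [isUnit_iff_ne_zero]
    intro h
    exact y.2 ((h0 _).1 h)
  let ψ : O →ₐ[R] p.asIdeal.ResidueField := IsLocalization.liftAlgHom (M := Q.primeCompl) (f := ψ₀) hunit
  have hψ : Function.Surjective ψ := by
    intro x
    obtain ⟨t, rfl⟩ := hs x
    exact ⟨algebraMap T O t, IsLocalization.lift_eq _ _⟩
  have hcnt := ci_count (A := A) (L := L) ψ hψ
  rw [← card_CI _ (CI_finite (resFieldAt R p) _)]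
  refine hcnt.trans ?_
  congr 1
  ext e
  refine and_congr_right fun _ => ?_
  rw [hc]
  refine forall_congr' fun i => ?_
  constructor
  · rintro ⟨⟨_, a, s, hsQ, rfl⟩, h⟩
    refine ⟨s, hsQ, a, ?_⟩
    rw [← h]
    have : algebraMap T L s ≠ 0 := by
      intro h; exact hsQ ((hTinj (by simpa using h) : s = 0) ▸ Q.zero_mem)
    change algebraMap T L s * (algebraMap T L a * (algebraMap T L s)⁻¹) = _
    field_simp
  · rintro ⟨s, hsQ, a, h⟩
    have : algebraMap T L s ≠ 0 := by
      intro h; exact hsQ ((hTinj (by simpa using h) : s = 0) ▸ Q.zero_mem)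
    refine ⟨⟨c i e, a, s, hsQ, ?_⟩, rfl⟩
    rw [← h]
    field_simp


lemma isOpen_dom {T L : Type*} [CommRing T] [Field L] [Algebra T L] (c : L) :
    IsOpen {Q : PrimeSpectrum T | Dom c Q.asIdeal} := by
  have : {Q : PrimeSpectrum T | Dom c Q.asIdeal} =
      ⋃ s ∈ {s : T | ∃ a : T, algebraMap T L s * c = algebraMap T L a},
        (PrimeSpectrum.basicOpen s : Set (PrimeSpectrum T)) := by
    ext Q
    simp only [Dom, Set.mem_ofPred_eq, Set.mem_iUnion, SetLike.mem_coe, PrimeSpectrum.mem_basicOpen,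
      exists_prop]
    exact ⟨fun ⟨s, h1, h2⟩ => ⟨s, h2, h1⟩, fun ⟨s, h2, h1⟩ => ⟨s, h1, h2⟩⟩
  rw [this]
  exact isOpen_biUnion fun s _ => (PrimeSpectrum.basicOpen s).2

lemma isClosed_count {T L B : Type*} [CommRing T] [Field L] [Algebra T L] (S : Set B) (hS : S.Finite)
    (n : ℕ) (c : Fin n → B → L) (N : ℕ) :
    IsClosed {Q : PrimeSpectrum T | {e | e ∈ S ∧ ∀ i, Dom (c i e) Q.asIdeal}.ncard < N} := by
  rw [← isOpen_compl_iff, isOpen_iff_mem_nhds]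
  intro Q hQ
  have h : (⋂ e ∈ {e | e ∈ S ∧ ∀ i, Dom (c i e) Q.asIdeal}, ⋂ i,
      {Q' : PrimeSpectrum T | Dom (c i e) Q'.asIdeal}) ∈ nhds Q := by
    rw [Filter.biInter_mem (hS.subset fun e he => he.1)]
    rintro e ⟨_, he⟩
    rw [Filter.iInter_mem]
    intro i
    exact (isOpen_dom (c i e)).mem_nhds (he i)
  refine Filter.mem_of_superset h ?_
  intro Q' hQ'
  simp only [Set.mem_iInter, Set.mem_ofPred_eq] at hQ'
  simp only [Set.mem_compl_iff, Set.mem_ofPred_eq, not_lt] at hQ ⊢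
  refine hQ.trans (Set.ncard_le_ncard ?_ (hS.subset fun e he => he.1))
  intro e he
  exact ⟨he.1, fun i => hQ' e he i⟩

lemma topo {R : Type*} [CommRing R] [IsDomain R] [JacobsonSpace (PrimeSpectrum R)]
    (f : PrimeSpectrum R → ℕ) (N : ℕ)
    (ha : ∀ n, ∃ Z : Set (PrimeSpectrum R), IsClosed Z ∧
      ∀ m : PrimeSpectrum R, IsClosed ({m} : Set (PrimeSpectrum R)) → (m ∈ Z ↔ f m < n))
    (hb : ∀ m : PrimeSpectrum R, IsClosed ({m} : Set (PrimeSpectrum R)) → f m ≤ N)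
    (S : Set (PrimeSpectrum R)) (hS : S.Finite) (hS1 : ∀ p ∈ S, H1 p.asIdeal)
    (hc : ∀ m : PrimeSpectrum R, IsClosed ({m} : Set (PrimeSpectrum R)) →
      (f m < N ↔ ∃ p ∈ S, p ≤ m)) :
    LowerSemicontinuousOn f {m : PrimeSpectrum R | IsClosed ({m} : Set (PrimeSpectrum R))} ∧
    (∀ n : ℕ,
      (∃ (Z U : Set (PrimeSpectrum R)), IsClosed Z ∧ IsOpen U ∧
        {m : PrimeSpectrum R | IsClosed ({m} : Set (PrimeSpectrum R)) ∧ f m = n} =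
        Z ∩ U ∩ {m : PrimeSpectrum R | IsClosed ({m} : Set (PrimeSpectrum R))}) ∧
      closure {m : PrimeSpectrum R | IsClosed ({m} : Set (PrimeSpectrum R)) ∧ f m = n} ∩
        {m : PrimeSpectrum R | IsClosed ({m} : Set (PrimeSpectrum R))} ⊆
      {m : PrimeSpectrum R | IsClosed ({m} : Set (PrimeSpectrum R)) ∧ f m ≤ n}) ∧
    (∀ m : PrimeSpectrum R, IsClosed ({m} : Set (PrimeSpectrum R)) → f m ≤ N) ∧
    (∃ m : PrimeSpectrum R, IsClosed ({m} : Set (PrimeSpectrum R)) ∧ f m = N) ∧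
    IsReducedWeilDivisorIn {m : PrimeSpectrum R | IsClosed ({m} : Set (PrimeSpectrum R)) ∧ f m < N} := by
  have hcl : ∀ p m : PrimeSpectrum R, m ∈ closure {p} ↔ p ≤ m := fun p m => by
    rw [← specializes_iff_mem_closure, PrimeSpectrum.le_iff_specializes]
  refine ⟨?_, ?_, hb, ?_, ?_⟩
  · intro x hx y hy
    obtain ⟨Z, hZ, h⟩ := ha (y + 1)
    have h1 : Zᶜ ∈ nhdsWithin x {m | IsClosed {m}} :=
      mem_nhdsWithin_of_mem_nhds (hZ.isOpen_compl.mem_nhds (by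
        rw [Set.mem_compl_iff, h x hx]; omega))
    filter_upwards [h1, self_mem_nhdsWithin] with m hm hm'
    rw [Set.mem_compl_iff, h m hm'] at hm
    omega
  · intro n
    obtain ⟨Z, hZ, h⟩ := ha (n + 1)
    obtain ⟨Z', hZ', h'⟩ := ha n
    refine ⟨⟨Z, Z'ᶜ, hZ, hZ'.isOpen_compl, ?_⟩, ?_⟩
    · ext m
      simp only [Set.mem_ofPred_eq, Set.mem_inter_iff, Set.mem_compl_iff]
      constructor
      · rintro ⟨hm, rfl⟩
        refine ⟨⟨(h m hm).2 (by omega), ?_⟩, hm⟩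
        rw [h' m hm]; omega
      · rintro ⟨⟨h1, h2⟩, hm⟩
        rw [h m hm] at h1
        rw [h' m hm] at h2
        exact ⟨hm, by omega⟩
    · rintro m ⟨h1, hm⟩
      have : m ∈ Z := closure_minimal (fun x hx => (h x hx.1).2 (by have := hx.2; omega)) hZ h1
      rw [h m hm] at this
      exact ⟨hm, by omega⟩
  · have hop : IsOpen (⋃ p ∈ S, closure {p})ᶜ :=
      (hS.isClosed_biUnion fun p _ => isClosed_closure).isOpen_compl
    obtain ⟨m, hm, hm'⟩ := nonempty_inter_closedPoints (Z := (⋃ p ∈ S, closure {p})ᶜ)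
      ⟨⊥, by
        simp only [Set.mem_compl_iff, Set.mem_iUnion, not_exists]
        intro p hp hmem
        rw [hcl] at hmem
        have h2 : p.asIdeal ≤ ⊥ := hmem
        exact (hS1 p hp).1 (le_bot_iff.1 h2)⟩ hop.isLocallyClosed
    refine ⟨m, hm', le_antisymm (hb m hm') (not_lt.1 fun hlt => ?_)⟩
    obtain ⟨p, hp, hle⟩ := (hc m hm').1 hlt
    apply hm
    simp only [Set.mem_iUnion]
    exact ⟨p, hp, (hcl p m).2 hle⟩
  · set E := {m : PrimeSpectrum R | IsClosed ({m} : Set (PrimeSpectrum R)) ∧ f m < N} with hE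
    have hclos : ∀ p : PrimeSpectrum R, closure (closure {p} ∩ closedPoints (PrimeSpectrum R)) = closure {p} :=
      fun p => closure_inter_closedPoints isClosed_closure
    have key : ∀ C, IsIrredCompOf C E → ∃ p ∈ S, C = closure {p} ∩ closedPoints (PrimeSpectrum R) := by
      rintro C ⟨hC, hCE, hmax⟩
      have hsub : ∃ p ∈ S, C ⊆ closure {p} := by
        have := (isIrreducible_iff_sUnion_isClosed.1 hC) (hS.toFinset.image fun p => closure {p})
          (by
            intro z hz
            simp only [Finset.mem_image] at hz
            obtain ⟨p, -, rfl⟩ := hz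
            exact isClosed_closure)
          (by
            intro m hm
            obtain ⟨p, hp, hle⟩ := (hc m (hCE hm).1).1 (hCE hm).2
            simp only [Finset.coe_image, Set.sUnion_image, Set.mem_iUnion]
            exact ⟨p, by simpa using hp, (hcl p m).2 hle⟩)
        obtain ⟨z, hz, hCz⟩ := this
        simp only [Finset.mem_image] at hz
        obtain ⟨p, hp, rfl⟩ := hz
        exact ⟨p, by simpa using hp, hCz⟩
      obtain ⟨p, hp, hCp⟩ := hsub
      refine ⟨p, hp, (hmax _ ?_ ?_ ?_).symm⟩
      · rw [← isIrreducible_iff_closure, hclos]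
        exact isIrreducible_singleton.closure
      · rintro m ⟨h1, h2⟩
        exact ⟨h2, (hc m h2).2 ⟨p, hp, (hcl p m).1 h1⟩⟩
      · exact fun m hm => ⟨hCp hm, (hCE hm).1⟩
    refine ⟨(hS.image fun p => closure {p} ∩ closedPoints (PrimeSpectrum R)).subset ?_, ?_⟩
    · intro C hC
      obtain ⟨p, hp, rfl⟩ := key C hC
      exact ⟨p, hp, rfl⟩
    · intro C hC
      obtain ⟨p, hp, rfl⟩ := key C hC
      exact ⟨p, hclos p, (hS1 p hp).height⟩

lemma main (k : Type u) [Field k] [IsAlgClosed k]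
    (R : Type u) [CommRing R] [IsDomain R] [Algebra k R] [Algebra.FiniteType k R]
    (A : Type u) [Ring A] [Algebra R A] [Module.Finite R A] [Module.Flat R A]
    (L : Type u) [Field L] [IsAlgClosed L] [Algebra R L] [FaithfulSMul R L] [Algebra.IsAlgebraic R L] :
    (∀ n, ∃ Z : Set (PrimeSpectrum R), IsClosed Z ∧
      ∀ m : PrimeSpectrum R, IsClosed ({m} : Set (PrimeSpectrum R)) →
        (m ∈ Z ↔ numBlocks (resFieldAt R m ⊗[R] A) < n)) ∧
    (∀ m : PrimeSpectrum R, IsClosed ({m} : Set (PrimeSpectrum R)) →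
      numBlocks (resFieldAt R m ⊗[R] A) ≤ numBlocks (L ⊗[R] A)) ∧
    ∃ S : Set (PrimeSpectrum R), S.Finite ∧ (∀ p ∈ S, H1 p.asIdeal) ∧
    (∀ m : PrimeSpectrum R, IsClosed ({m} : Set (PrimeSpectrum R)) →
      (numBlocks (resFieldAt R m ⊗[R] A) < numBlocks (L ⊗[R] A) ↔ ∃ p ∈ S, p ≤ m)) := by
  have : IsNoetherianRing R := Algebra.FiniteType.isNoetherianRing k R
  have : Module.FinitePresentation R A := Module.finitePresentation_of_finite R A
  have : Module.Projective R A := Module.Flat.projective_of_finitePresentation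
  let T := integralClosure R L
  have hfr : IsFractionRing T L := integralClosure.isFractionRing_of_algebraic
    ((injective_iff_map_eq_zero _).1 (FaithfulSMul.algebraMap_injective R L))
  have hic : IsIntegrallyClosed T := by
    rw [isIntegrallyClosed_iff L]
    intro x hx
    exact (IsIntegralClosure.isIntegral_iff (A := T) (R := R)).1 (isIntegral_trans (R := R) x hx)
  have hint : Algebra.IsIntegral R T := inferInstance
  have hfaith : FaithfulSMul R T := by
    rw [faithfulSMul_iff_algebraMap_injective]
    intro x y h
    apply FaithfulSMul.algebraMap_injective R L
    rw [IsScalarTower.algebraMap_apply R T L, h, ← IsScalarTower.algebraMap_apply R T L]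
  obtain ⟨n, c, hc⟩ := exists_coords (R := R) (A := A) L
  have hcount := fun p hp Q (hQp : Ideal.IsPrime Q) hQ =>
    count_fiber (T := T) (A := A) k n c (fun O e => hc O e) p hp Q hQ
  have hfin : (CI (L ⊗[R] A)).Finite := CI_finite L _
  have hN := card_CI _ hfin
  have hover : ∀ p : PrimeSpectrum R, ∃ Q : PrimeSpectrum T, Q.asIdeal.under R = p.asIdeal := by
    intro p
    obtain ⟨Q, hQ, h⟩ := Ideal.nonempty_primesOver (S := T) p.asIdeal
    exact ⟨⟨Q, hQ⟩, h.over.symm⟩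
  have hlt : ∀ a b : ℕ, a < b ↔ 2 ^ a < 2 ^ b := fun a b => (Nat.pow_lt_pow_iff_right (by norm_num)).symm
  have hexc : ∀ Q : Ideal T, {e | e ∈ CI (L ⊗[R] A) ∧ ∀ i, Dom (c i e) Q}.ncard < (CI (L ⊗[R] A)).ncard ↔
      ∃ e ∈ CI (L ⊗[R] A), ∃ i, ¬ Dom (c i e) Q := by
    intro Q
    constructor
    · intro h
      by_contra hcon
      push Not at hcon
      refine h.ne ?_
      congr 1
      ext e
      exact ⟨fun h => h.1, fun h => ⟨h, hcon e h⟩⟩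
    · rintro ⟨e, he, i, hi⟩
      exact Set.ncard_lt_ncard ⟨fun x hx => hx.1, fun hsub => hi ((hsub he).2 i)⟩ hfin
  refine ⟨?_, ?_, ?_⟩
  · intro j
    refine ⟨PrimeSpectrum.comap (algebraMap R T) '' _,
      PrimeSpectrum.isClosedMap_comap_of_isIntegral _ (algebraMap_isIntegral_iff.2 hint) _
        (isClosed_count (T := T) (CI (L ⊗[R] A)) hfin n c (2 ^ j)), ?_⟩
    intro m hm
    constructor
    · rintro ⟨Q, hQ, rfl⟩
      rw [hlt, hcount _ hm Q.asIdeal Q.2 rfl]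
      exact hQ
    · intro h
      obtain ⟨Q, hQ⟩ := hover m
      rw [hlt, hcount _ hm Q.asIdeal Q.2 hQ] at h
      exact ⟨Q, h, PrimeSpectrum.ext hQ⟩
  · intro m hm
    obtain ⟨Q, hQ⟩ := hover m
    rw [← Nat.pow_le_pow_iff_right (a := 2) (by norm_num), hcount _ hm Q.asIdeal Q.2 hQ, ← hN]
    exact Set.ncard_le_ncard (fun e he => he.1) hfin
  · refine ⟨{p | H1 p.asIdeal ∧ ∃ q : PrimeSpectrum T, q.asIdeal.under R = p.asIdeal ∧
      ∃ e ∈ CI (L ⊗[R] A), ∃ i, ¬ Dom (c i e) q.asIdeal}, ?_, fun p hp => hp.1, ?_⟩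
    · classical
      obtain ⟨d, hd0, hd⟩ := Algebra.IsAlgebraic.exists_integral_multiples (R := R) (A := L)
        ((hfin.toFinset ×ˢ (Finset.univ : Finset (Fin n))).image fun x => c x.2 x.1)
      refine Set.Finite.of_finite_image (f := PrimeSpectrum.asIdeal)
        ((Ideal.finite_minimalPrimes_of_isNoetherianRing R (Ideal.span {d})).subset ?_)
        (fun x _ y _ h => PrimeSpectrum.ext h)
      rintro _ ⟨p, ⟨hp1, q, hq, e, he, i, hi⟩, rfl⟩
      have hdp : d ∈ p.asIdeal := by
        by_contra hdp
        apply hi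
        have := hd (c i e) (Finset.mem_image.2 ⟨(e, i), by simpa using he, rfl⟩)
        refine ⟨algebraMap R T d, fun h => hdp (hq ▸ h), ⟨d • c i e, this⟩, ?_⟩
        rw [← IsScalarTower.algebraMap_apply R T L, ← Algebra.smul_def]
        rfl
      refine ⟨⟨p.2, by rwa [Ideal.span_singleton_le_iff_mem]⟩, ?_⟩
      rintro p' ⟨hp', hdp'⟩ hle
      rw [Ideal.span_singleton_le_iff_mem] at hdp'
      rcases hle.lt_or_eq with h | h
      · have := hp1.2 p' hp' h
        subst this
        exact absurd (by simpa using hdp') hd0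
      · exact h.ge
    · intro m hm
      constructor
      · intro h
        obtain ⟨Q, hQ⟩ := hover m
        rw [hlt, hcount _ hm Q.asIdeal Q.2 hQ, ← hN, hexc] at h
        obtain ⟨e, he, i, hi⟩ := h
        obtain ⟨q, hqp, hqQ, h1, h2⟩ := purity2 k (R := R) (c i e) Q.asIdeal hi
        refine ⟨⟨q.under R, hqp.under R⟩, ⟨h1, ⟨q, hqp⟩, rfl, e, he, i, h2⟩, ?_⟩
        change q.under R ≤ m.asIdeal
        rw [← hQ]
        exact Ideal.comap_mono hqQ
      · rintro ⟨p, ⟨-, q, hq, e, he, i, hi⟩, hle⟩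
        obtain ⟨Q, hQq, hQp, hQ⟩ := Ideal.exists_ideal_over_prime_of_isIntegral_of_isPrime m.asIdeal q.asIdeal
          (by
            have h3 : p.asIdeal ≤ m.asIdeal := hle
            rw [← hq] at h3
            exact h3)
        rw [hlt, hcount _ hm Q hQp hQ, ← hN, hexc]
        refine ⟨e, he, i, ?_⟩
        rintro ⟨s, hs, a, ha⟩
        exact hi ⟨s, fun h => hs (hQq h), a, ha⟩

end Final

/-- **Corollary `finite_type_alg_closed_setting`.** -/
theorem stmt6 (k : Type u) [Field k] [IsAlgClosed k]
    (R : Type u) [CommRing R] [IsDomain R] [Algebra k R] [Algebra.FiniteType k R]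
    (A : Type u) [Ring A] [Algebra R A] [Module.Finite R A] [Module.Flat R A] :
    LowerSemicontinuousOn (fun p : PrimeSpectrum R => numBlocks (resFieldAt R p ⊗[R] A))
      {m : PrimeSpectrum R | IsClosed ({m} : Set (PrimeSpectrum R))} ∧
    (∀ n : ℕ,
      (∃ (Z U : Set (PrimeSpectrum R)), IsClosed Z ∧ IsOpen U ∧
        {m : PrimeSpectrum R | IsClosed ({m} : Set (PrimeSpectrum R)) ∧
          numBlocks (resFieldAt R m ⊗[R] A) = n} =
        Z ∩ U ∩ {m : PrimeSpectrum R | IsClosed ({m} : Set (PrimeSpectrum R))}) ∧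
      closure {m : PrimeSpectrum R | IsClosed ({m} : Set (PrimeSpectrum R)) ∧
          numBlocks (resFieldAt R m ⊗[R] A) = n} ∩
        {m : PrimeSpectrum R | IsClosed ({m} : Set (PrimeSpectrum R))} ⊆
      {m : PrimeSpectrum R | IsClosed ({m} : Set (PrimeSpectrum R)) ∧
          numBlocks (resFieldAt R m ⊗[R] A) ≤ n}) ∧
    (∀ m : PrimeSpectrum R, IsClosed ({m} : Set (PrimeSpectrum R)) →
      numBlocks (resFieldAt R m ⊗[R] A) ≤
        numBlocks (AlgebraicClosure (FractionRing R) ⊗[FractionRing R] (FractionRing R ⊗[R] A))) ∧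
    (∃ m : PrimeSpectrum R, IsClosed ({m} : Set (PrimeSpectrum R)) ∧
      numBlocks (resFieldAt R m ⊗[R] A) =
        numBlocks (AlgebraicClosure (FractionRing R) ⊗[FractionRing R] (FractionRing R ⊗[R] A))) ∧
    (IsUniversallyCatenary R →
      ({m : PrimeSpectrum R | IsClosed ({m} : Set (PrimeSpectrum R)) ∧
          numBlocks (resFieldAt R m ⊗[R] A) <
            numBlocks (AlgebraicClosure (FractionRing R) ⊗[FractionRing R]
              (FractionRing R ⊗[R] A))} = ∅ ∨
        IsReducedWeilDivisorIn {m : PrimeSpectrum R | IsClosed ({m} : Set (PrimeSpectrum R)) ∧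
          numBlocks (resFieldAt R m ⊗[R] A) <
            numBlocks (AlgebraicClosure (FractionRing R) ⊗[FractionRing R]
              (FractionRing R ⊗[R] A))})) := by
  let L := AlgebraicClosure (FractionRing R)
  have : Algebra.IsAlgebraic R L :=
    (IsFractionRing.comap_isAlgebraic_iff (A := R) (K := FractionRing R)).2 inferInstance
  have : FaithfulSMul R L := by
    rw [faithfulSMul_iff_algebraMap_injective, IsScalarTower.algebraMap_eq R (FractionRing R) L]
    exact (algebraMap (FractionRing R) L).injective.comp (IsFractionRing.injective R (FractionRing R))
  have hN : numBlocks (L ⊗[FractionRing R] (FractionRing R ⊗[R] A)) = numBlocks (L ⊗[R] A) :=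
    (numBlocks_congr (Algebra.TensorProduct.algEquivOfLinearEquivTensorProduct
        (TensorProduct.AlgebraTensorModule.cancelBaseChange R (FractionRing R) L L A).symm
        (fun a₁ a₂ b₁ b₂ => by
          simp only [TensorProduct.AlgebraTensorModule.cancelBaseChange_symm_tmul,
            Algebra.TensorProduct.tmul_mul_tmul, mul_one]) rfl).toRingEquiv
      (CI_finite L _) (CI_finite L _)).symm
  have : IsJacobsonRing R := isJacobsonRing_of_finiteType (A := k)
  have : JacobsonSpace (PrimeSpectrum R) := PrimeSpectrum.isJacobsonRing_iff_jacobsonSpace.1 this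
  obtain ⟨h1, h2, S, hS, hS1, hS2⟩ := main k R A L
  obtain ⟨g1, g2, g3, g4, g5⟩ := topo (fun p : PrimeSpectrum R => numBlocks (resFieldAt R p ⊗[R] A))
    (numBlocks (L ⊗[R] A)) h1 h2 S hS hS1 hS2
  rw [← hN] at g3 g4 g5
  exact ⟨g1, g2, g3, g4, fun _ => Or.inr g5⟩
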